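/- arXiv:2501.03726 — 3 statements merged into one kernel-verified Lean document; each statement's English description precedes it below -/
import Mathlib

section
/- Let ξ be a rational number with ξ ≠ 0, ξ ≠ 1 and ξ ≠ −1, and let i and i' be distinct integers. Let V and V' be cochain complexes of ℚ[X]-modules such that for every k the cohomology H^k(V) is finite-dimensional over ℚ with X − ξ^i acting nilpotently on it, and H^k(V') is finite-dimensional over ℚ with X − ξ^{i'} acting nilpotently on it. Then for every integer m, every morphism from the image of V to the m-fold shift of the image of V' in the derived category of ℚ[X]-modules is zero. -/
open CategoryTheory Polynomial

/-!
Put `a = ξ ^ i` and `b = ξ ^ i'`, so `a ≠ b`, and let `S` be the powers of `X - a`. Localization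
at `S` is an exact endofunctor `L` of `ℚ[X]`-modules with a natural map `η : 𝟭 ⟶ L`, both of which
extend termwise to (unbounded) complexes. The cohomology of `V` is `(X - a)`-power torsion, so `L V`
is acyclic; the cohomology of `V'` is `(X - b)`-power torsion, so `X - a` acts bijectively on it,
and `η` is a quasi-isomorphism on every complex quasi-isomorphic to a shift of `V'`.

A morphism `V ⟶ V'⟦m⟧` of the derived category is a left fraction `s⁻¹ ∘ f` with `f : V ⟶ W` a
chain map and `s : V'⟦m⟧ ⟶ W` a quasi-isomorphism. Naturality gives `η_W ∘ f = L f ∘ η_V`, which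
factors through the acyclic complex `L V`; as `η_W` is a quasi-isomorphism, `f` becomes zero in the
derived category (`Q_map_eq_zero`). The torsion exponents may be unbounded as the degree varies,
which is why localization is used rather than multiplication by a fixed power of `X - a`.
-/

universe v w

namespace PureHom

variable {R : Type} [CommRing R] [Small.{v} R] (S : Submonoid R)

/-- Localization of modules at `S`, regarded as an endofunctor of `R`-modules. -/
noncomputable def loc : ModuleCat.{v} R ⥤ ModuleCat.{v} R :=
  ModuleCat.localizedModuleFunctor.{v} S ⋙
    ModuleCat.restrictScalars.{v} (algebraMap R (Localization S))

instance : (loc.{v} S).Additive := by unfold loc; infer_instance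
instance : (loc.{v} S).PreservesHomology := by unfold loc; infer_instance

/-- The localization map `M → S⁻¹M`, `R`-linear for the structure restricted from `S⁻¹R`. -/
noncomputable def toLoc (M : ModuleCat.{v} R) : M →ₗ[R] (loc.{v} S).obj M where
  toFun := M.localizedModuleMkLinearMap S
  map_add' := map_add _
  map_smul' r m := by
    rw [map_smul]
    exact (algebraMap_smul (A := Localization S) (M := M.localizedModule S) r
      (M.localizedModuleMkLinearMap S m)).symm

/-- The identity, comparing the two `R`-module structures on `S⁻¹M`: the intrinsic one and the one
restricted from `S⁻¹R`. -/
noncomputable def locEquiv (M : ModuleCat.{v} R) :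
    M.localizedModule S ≃ₗ[R] (loc.{v} S).obj M where
  toFun := fun x => x
  invFun := fun x => x
  left_inv _ := rfl
  right_inv _ := rfl
  map_add' _ _ := rfl
  map_smul' r m := (algebraMap_smul (Localization S) r m).symm

instance (M : ModuleCat.{v} R) : IsLocalizedModule S (toLoc.{v} S M) := by
  have h : toLoc.{v} S M = (locEquiv S M).toLinearMap ∘ₗ M.localizedModuleMkLinearMap S := rfl
  rw [h]
  infer_instance

/-- The localization map `M → S⁻¹M` as a natural transformation. -/
noncomputable def eta : 𝟭 (ModuleCat.{v} R) ⟶ loc.{v} S where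
  app M := ModuleCat.ofHom (X := M) (Y := (loc.{v} S).obj M) (toLoc.{v} S M)
  naturality M N f := by
    ext x
    have h : (ModuleCat.localizedModuleMap S f).hom (M.localizedModuleMkLinearMap S x) =
        N.localizedModuleMkLinearMap S (f.hom x) := by
      rw [ModuleCat.localizedModuleMap_hom_apply]
      exact IsLocalizedModule.map_apply S (M.localizedModuleMkLinearMap S)
        (N.localizedModuleMkLinearMap S) f.hom x
    exact h.symm

lemma isZero_loc (M : ModuleCat.{v} R) (h : ∀ x : M, ∃ r ∈ S, r • x = 0) :
    Limits.IsZero ((loc.{v} S).obj M) := by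
  have := (IsLocalizedModule.subsingleton_iff S (toLoc.{v} S M)).2 h
  exact ModuleCat.isZero_of_subsingleton _

lemma isIso_eta (M : ModuleCat.{v} R)
    (h : ∀ r ∈ S, Function.Bijective (fun x : M => r • x)) :
    IsIso ((eta.{v} S).app M) := by
  rw [ConcreteCategory.isIso_iff_bijective]
  suffices h' : Function.Bijective (toLoc.{v} S M) from h'
  constructor
  · intro x y hxy
    obtain ⟨c, hc⟩ := (IsLocalizedModule.eq_iff_exists S (toLoc.{v} S M)).1 hxy
    exact (h c c.2).1 hc
  · intro y
    obtain ⟨⟨x, s⟩, hs⟩ := IsLocalizedModule.surj S (toLoc.{v} S M) y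
    obtain ⟨x', rfl⟩ := (h s s.2).2 x
    refine ⟨x', IsLocalizedModule.smul_injective (toLoc.{v} S M) s ?_⟩
    exact (hs.trans ((toLoc.{v} S M).map_smul _ _)).symm

/-- Termwise localization of cochain complexes. -/
noncomputable abbrev locC (K : CochainComplex (ModuleCat.{v} R) ℤ) :
    CochainComplex (ModuleCat.{v} R) ℤ :=
  ((loc.{v} S).mapHomologicalComplex _).obj K

/-- The termwise localization map `K ⟶ S⁻¹K`. -/
noncomputable def etaC (K : CochainComplex (ModuleCat.{v} R) ℤ) : K ⟶ locC S K where
  f n := (eta.{v} S).app (K.X n)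
  comm' p q _ := ((eta.{v} S).naturality (K.d p q)).symm

lemma etaC_naturality {K L : CochainComplex (ModuleCat.{v} R) ℤ} (f : K ⟶ L) :
    f ≫ etaC S L = etaC S K ≫ ((loc.{v} S).mapHomologicalComplex _).map f := by
  ext n : 1
  exact (eta.{v} S).naturality (f.f n)

lemma acyclic_locC (K : CochainComplex (ModuleCat.{v} R) ℤ)
    (h : ∀ (n : ℤ) (x : K.homology n), ∃ r ∈ S, r • x = 0) : (locC S K).Acyclic := by
  intro n
  rw [HomologicalComplex.exactAt_iff_isZero_homology]
  exact (isZero_loc S _ (h n)).of_iso ((K.sc n).mapHomologyIso (loc.{v} S))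

lemma quasiIso_etaC (K : CochainComplex (ModuleCat.{v} R) ℤ)
    (h : ∀ (n : ℤ), ∀ r ∈ S, Function.Bijective (fun x : K.homology n => r • x)) :
    QuasiIso (etaC S K) := by
  rw [quasiIso_iff]
  intro n
  rw [quasiIsoAt_iff_isIso_homologyMap]
  have h1 := NatTrans.app_homology (eta.{v} S) (K.sc n)
  have h2 : IsIso ((eta.{v} S).app (K.sc n).homology) := isIso_eta S _ (h n)
  rw [h1, isIso_comp_left_iff, isIso_comp_right_iff] at h2
  exact h2

/-- A chain map from a complex whose cohomology vanishes after localization at `S` to a complex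
whose cohomology is already `S`-local becomes zero in the derived category. -/
lemma Q_map_eq_zero [HasDerivedCategory.{w} (ModuleCat.{v} R)]
    {K L : CochainComplex (ModuleCat.{v} R) ℤ} (f : K ⟶ L)
    (hK : ∀ (n : ℤ) (x : K.homology n), ∃ r ∈ S, r • x = 0)
    (hL : ∀ (n : ℤ), ∀ r ∈ S, Function.Bijective (fun x : L.homology n => r • x)) :
    DerivedCategory.Q.map f = 0 := by
  have := quasiIso_etaC S L hL
  have hz : Limits.IsZero (DerivedCategory.Q.obj (locC S K)) := by
    -- The zero endomorphism of an acyclic complex is a quasi-isomorphism.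
    have hq : QuasiIso (0 : locC S K ⟶ locC S K) := by
      rw [quasiIso_iff]
      intro n
      rw [quasiIsoAt_iff_exactAt _ _ (acyclic_locC S K hK n)]
      exact acyclic_locC S K hK n
    have hi := (DerivedCategory.isIso_Q_map_iff_quasiIso _ _).2 hq
    rw [Functor.map_zero] at hi
    exact (Limits.isIsoZero_iff_source_target_isZero _ _).1 hi |>.1
  have := (DerivedCategory.isIso_Q_map_iff_quasiIso _ (etaC S L)).2 this
  rw [← cancel_mono (DerivedCategory.Q.map (etaC S L)), ← Functor.map_comp, etaC_naturality,
    Functor.map_comp, hz.eq_of_tgt (DerivedCategory.Q.map (etaC S K)) 0]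
  simp

end PureHom

open PureHom

lemma zpow_ne_of_ne {ξ : ℚ} (hξ0 : ξ ≠ 0) (hξ1 : ξ ≠ 1) (hξm1 : ξ ≠ -1)
    {i i' : ℤ} (hii' : i ≠ i') : ξ ^ i ≠ ξ ^ i' := by
  intro h
  have h1 : |ξ| ^ i = |ξ| ^ i' := by rw [← abs_zpow, ← abs_zpow, h]
  refine hii' (zpow_right_injective₀ (abs_pos.2 hξ0) ?_ h1)
  intro h2
  rcases (abs_eq zero_le_one).1 h2 with h | h <;> contradiction

/-- If `p` is coprime to `q` and `q` acts on `M` with a power equal to zero, then every power of `p`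
acts bijectively on `M`. -/
lemma bijective_smul_of_coprime {R M : Type*} [CommRing R] [AddCommGroup M] [Module R M]
    {p q : R} (hpq : IsCoprime p q) (N : ℕ) (hN : ∀ x : M, q ^ N • x = 0)
    (r : R) (hr : r ∈ Submonoid.powers p) : Function.Bijective (fun x : M => r • x) := by
  obtain ⟨n, rfl⟩ := hr
  obtain ⟨u, t, hut⟩ := hpq.pow (m := n) (n := N)
  have key (x : M) : u • p ^ n • x = x := by
    have := congrArg (· • x) hut
    simpa [add_smul, mul_smul, hN] using this
  refine Function.bijective_iff_has_inverse.2 ⟨fun x => u • x, key, fun x => ?_⟩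
  change p ^ n • u • x = x
  rw [smul_comm, key]

/-- **Purity in distinct weights kills derived-category mapping spaces.**
Let `V, V'` be cochain complexes of `ℚ[X]`-modules whose cohomologies are
finite dimensional over `ℚ` and pure of weights `i` resp. `i'` with `i ≠ i'`.
Then every map `V → V'[m]` in the derived category `D(ℚ[X])` is zero. -/
theorem stmt_3 [HasDerivedCategory (ModuleCat (Polynomial ℚ))]
    (ξ : ℚ) (hξ0 : ξ ≠ 0) (hξ1 : ξ ≠ 1) (hξm1 : ξ ≠ -1)
    (i i' : ℤ) (hii' : i ≠ i')
    (V V' : CochainComplex (ModuleCat (Polynomial ℚ)) ℤ)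
    (hVfin : ∀ k : ℤ, Module.Finite ℚ
      (RestrictScalars ℚ (Polynomial ℚ) (V.homology k)))
    (hV'fin : ∀ k : ℤ, Module.Finite ℚ
      (RestrictScalars ℚ (Polynomial ℚ) (V'.homology k)))
    (hV : ∀ k : ℤ, ∃ N : ℕ, ∀ v : V.homology k,
      ((X - C (ξ ^ i)) ^ N : Polynomial ℚ) • v = 0)
    (hV' : ∀ k : ℤ, ∃ N : ℕ, ∀ v : V'.homology k,
      ((X - C (ξ ^ i')) ^ N : Polynomial ℚ) • v = 0)
    (m : ℤ)
    (φ : DerivedCategory.Q.obj V ⟶ (DerivedCategory.Q.obj V')⟦m⟧) :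
    φ = 0 := by
  let e := (DerivedCategory.Q.commShiftIso m).app V'
  obtain ⟨W, f, s, hs, hφ⟩ := DerivedCategory.left_fac (φ ≫ e.inv)
  have hcop : IsCoprime (X - C (ξ ^ i)) (X - C (ξ ^ i')) :=
    isCoprime_X_sub_C_of_isUnit_sub
      (sub_ne_zero.2 (zpow_ne_of_ne hξ0 hξ1 hξm1 hii')).isUnit
  have hf : DerivedCategory.Q.map f = 0 := by
    refine Q_map_eq_zero (Submonoid.powers (X - C (ξ ^ i))) f (fun n x => ?_) (fun n => ?_)
    · obtain ⟨N, hN⟩ := hV n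
      exact ⟨_, ⟨N, rfl⟩, hN x⟩
    · obtain ⟨N, hN⟩ := hV' (m + n)
      have : QuasiIso s := (DerivedCategory.isIso_Q_map_iff_quasiIso _ s).1 hs
      let e' : W.homology n ≅ V'.homology (m + n) :=
        (asIso (HomologicalComplex.homologyMap s n)).symm ≪≫
          (CochainComplex.ShiftSequence.shiftIso _ m n _ rfl).app V'
      refine bijective_smul_of_coprime hcop N fun x => e'.toLinearEquiv.injective ?_
      rw [map_smul, hN, map_zero]
  rw [← cancel_mono e.inv, hφ, hf]
  simp
end

section
/- Let n ≥ 1 and let S = ℚ[q₁, …, qₙ] be the polynomial ring in n variables over ℚ, let q = q₁⋯qₙ, and let σ : S → S be the ℚ-algebra automorphism determined by σ(qᵢ) = −qᵢ for all i. Let π : S → S/(q) be the quotient map, and let P be the ℚ-subalgebra of S × S consisting of all pairs (a, b) with π(a) = π(σ(b)). Then the ℚ-algebra homomorphism ℚ[x, q₁, …, qₙ] → S × S determined by qᵢ ↦ (−qᵢ, qᵢ) and x ↦ (0, q) has image exactly P and kernel exactly the principal ideal generated by x² − x·q₁⋯qₙ; hence it induces an isomorphism of ℚ-algebras ℚ[x,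 q₁, …, qₙ]/(x² − x·q₁⋯qₙ) ≅ P. -/
/-!
Write `ι f` for a polynomial `f ∈ S` regarded as a polynomial in `ℚ[x, q₁, …, qₙ]` not involving
`x`. Modulo `x² - x q` every polynomial has the form `ι f + x · ι g`
(`exists_normalForm`), and such a polynomial is sent by `Phi n` to `(σ f, f + q g)`
(`Phi_normalForm`).

* Kernel: if the image vanishes then `f = 0`, as `σ` is an involution, and then `q g = 0` forces
  `g = 0`, as `S` is a domain.
* Image: since `σ q = (-1)ⁿ q`, the element `σ f - σ (f + q g)` lies in `(q)`. Conversely, if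
  `a - σ b = q c`, then applying `σ` gives `b = σ a - (-1)ⁿ q σ(c)`, so `(a, b)` is the image of
  the normal form with `f = σ a` and `g = -(-1)ⁿ σ(c)`.
-/

open MvPolynomial

noncomputable section

/-- `S = ℚ[q₁, …, qₙ]`. -/
abbrev polyS (n : ℕ) : Type := MvPolynomial (Fin n) ℚ

/-- `q = q₁ ⋯ qₙ`. -/
def qProd (n : ℕ) : polyS n := ∏ i, X i

/-- The `ℚ`-algebra automorphism `σ` of `S` with `σ(qᵢ) = -qᵢ`. -/
def sigmaS (n : ℕ) : polyS n →ₐ[ℚ] polyS n := aeval fun i => -X i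

/-- The quotient map `π : S → S/(q)`. -/
def piS (n : ℕ) : polyS n →ₐ[ℚ] polyS n ⧸ Ideal.span {qProd n} :=
  Ideal.Quotient.mkₐ ℚ (Ideal.span {qProd n})

/-- The subalgebra `P ⊆ S × S` of pairs `(a, b)` with `π(a) = π(σ(b))`. -/
def Psub (n : ℕ) : Subalgebra ℚ (polyS n × polyS n) :=
  AlgHom.equalizer ((piS n).comp (AlgHom.fst ℚ (polyS n) (polyS n)))
    (((piS n).comp (sigmaS n)).comp (AlgHom.snd ℚ (polyS n) (polyS n)))

/-- The `ℚ`-algebra map `ℚ[x, q₁, …, qₙ] → S × S`, `qᵢ ↦ (-qᵢ, qᵢ)`, `x ↦ (0, q)`. -/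
def Phi (n : ℕ) : MvPolynomial (Option (Fin n)) ℚ →ₐ[ℚ] polyS n × polyS n :=
  aeval fun i => i.elim ((0 : polyS n), qProd n) fun j => (-X j, X j)

/-- The inclusion `S → ℚ[x, q₁, …, qₙ]`, `qᵢ ↦ qᵢ`, where `x` is the variable `none`. -/
def inclS (n : ℕ) : polyS n →ₐ[ℚ] MvPolynomial (Option (Fin n)) ℚ := rename some

/-- The ideal `(x² - x·q₁⋯qₙ)` of `ℚ[x, q₁, …, qₙ]`. -/
abbrev relIdeal (n : ℕ) : Ideal (MvPolynomial (Option (Fin n)) ℚ) :=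
  Ideal.span {(X none : MvPolynomial (Option (Fin n)) ℚ) ^ 2 - X none * ∏ i : Fin n, X (some i)}

lemma inclS_qProd (n : ℕ) : inclS n (qProd n) = ∏ i : Fin n, X (some i) := by
  simp [inclS, qProd, map_prod]

lemma sigmaS_sigmaS (n : ℕ) (f : polyS n) : sigmaS n (sigmaS n f) = f := by
  have h : (sigmaS n).comp (sigmaS n) = AlgHom.id ℚ _ := by
    ext i : 1
    simp [sigmaS]
  exact DFunLike.congr_fun h f

lemma sigmaS_qProd (n : ℕ) : sigmaS n (qProd n) = (-1) ^ n * qProd n := by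
  simp [sigmaS, qProd, map_prod, Finset.prod_neg]

lemma qProd_ne_zero (n : ℕ) : qProd n ≠ 0 :=
  Finset.prod_ne_zero_iff.2 fun i _ => X_ne_zero i

lemma Phi_inclS (n : ℕ) (f : polyS n) : Phi n (inclS n f) = (sigmaS n f, f) := by
  have h : (Phi n).comp (inclS n) = (sigmaS n).prod (AlgHom.id ℚ _) := by
    ext i : 1
    simp [Phi, inclS, sigmaS]
  exact DFunLike.congr_fun h f

lemma Phi_normalForm (n : ℕ) (f g : polyS n) :
    Phi n (inclS n f + X none * inclS n g) = (sigmaS n f, f + qProd n * g) := by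
  have hx : Phi n (X none) = (0, qProd n) := by simp [Phi]
  rw [map_add, map_mul, Phi_inclS, Phi_inclS, hx]
  simp

/-- Division with remainder by the monic quadratic `x² - x·q₁⋯qₙ` in `x`: every polynomial is
congruent to one of degree at most one in `x`. -/
lemma exists_normalForm (n : ℕ) (p : MvPolynomial (Option (Fin n)) ℚ) :
    ∃ f g : polyS n, p - (inclS n f + X none * inclS n g) ∈ relIdeal n := by
  induction p using MvPolynomial.induction_on with
  | C a => exact ⟨C a, 0, by simp [inclS]⟩
  | add p r hp hr =>
    obtain ⟨f, g, h⟩ := hp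
    obtain ⟨f', g', h'⟩ := hr
    refine ⟨f + f', g + g', ?_⟩
    convert add_mem h h' using 1
    simp only [map_add]
    ring
  | mul_X p i hp =>
    obtain ⟨f, g, h⟩ := hp
    cases i with
    | none =>
      -- `x (f + x g) = x (f + q g) + (x² - x q) g`
      refine ⟨0, f + qProd n * g, ?_⟩
      have hrel := Ideal.mul_mem_right (inclS n g) (relIdeal n)
        (Ideal.mem_span_singleton_self _)
      convert add_mem (Ideal.mul_mem_right (X none) _ h) hrel using 1
      simp only [map_add, map_mul, map_zero, inclS_qProd]
      ring
    | some j =>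
      refine ⟨f * X j, g * X j, ?_⟩
      convert Ideal.mul_mem_right (X (some j)) _ h using 1
      have hj : inclS n (X j) = X (some j) := by simp [inclS]
      simp only [map_mul, hj]
      ring

lemma ker_Phi (n : ℕ) : RingHom.ker (Phi n) = relIdeal n := by
  have hle : relIdeal n ≤ RingHom.ker (Phi n) := by
    rw [Ideal.span_singleton_le_iff_mem, RingHom.mem_ker, ← inclS_qProd, map_sub, map_pow,
      map_mul, Phi_inclS]
    have hx : Phi n (X none) = (0, qProd n) := by simp [Phi]
    rw [hx]
    ext1 <;> simp [sq]
  refine le_antisymm (fun p hp => ?_) hle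
  obtain ⟨f, g, h⟩ := exists_normalForm n p
  have h0 := hle h
  rw [RingHom.mem_ker] at hp h0
  rw [map_sub, hp, zero_sub, neg_eq_zero, Phi_normalForm, Prod.mk_eq_zero] at h0
  obtain ⟨h1, h2⟩ := h0
  have hf : f = 0 := by rw [← sigmaS_sigmaS n f, h1, map_zero]
  have hg : g = 0 := by
    rw [hf, zero_add] at h2
    exact (mul_eq_zero.1 h2).resolve_left (qProd_ne_zero n)
  simpa [hf, hg] using h

lemma mem_Psub (n : ℕ) (a b : polyS n) : (a, b) ∈ Psub n ↔ qProd n ∣ a - sigmaS n b := by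
  rw [← Ideal.mem_span_singleton, ← Ideal.Quotient.eq]
  rfl

lemma range_Phi (n : ℕ) : (Phi n).range = Psub n := by
  apply le_antisymm
  · rintro _ ⟨p, rfl⟩
    obtain ⟨f, g, h⟩ := exists_normalForm n p
    rw [← ker_Phi, RingHom.mem_ker, map_sub, sub_eq_zero, Phi_normalForm] at h
    change Phi n p ∈ Psub n
    rw [h, mem_Psub]
    refine ⟨-((-1) ^ n * sigmaS n g), ?_⟩
    rw [map_add, map_mul, sigmaS_qProd]
    ring
  · rintro ⟨a, b⟩ hab
    obtain ⟨c, hc⟩ := (mem_Psub n a b).1 hab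
    have hc' := congrArg (sigmaS n) hc
    rw [map_sub, map_mul, sigmaS_sigmaS, sigmaS_qProd] at hc'
    refine ⟨inclS n (sigmaS n a) + X none * inclS n (-((-1) ^ n * sigmaS n c)), ?_⟩
    change Phi n _ = _
    rw [Phi_normalForm, sigmaS_sigmaS]
    refine Prod.ext rfl ?_
    change sigmaS n a + qProd n * -((-1) ^ n * sigmaS n c) = b
    linear_combination hc'

/-- **Identification of the fiber product `P`.**
The map `ℚ[x, q₁, …, qₙ] → S × S` with `qᵢ ↦ (-qᵢ, qᵢ)` and `x ↦ (0, q₁⋯qₙ)` has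
image `P` and kernel `(x² - x·q₁⋯qₙ)`, hence it induces a `ℚ`-algebra isomorphism
`ℚ[x, q₁, …, qₙ]/(x² - x·q₁⋯qₙ) ≅ P`. -/
theorem stmt_6 (n : ℕ) (hn : 1 ≤ n) :
    (Phi n).range = Psub n ∧
    RingHom.ker (Phi n) =
      Ideal.span {(X none : MvPolynomial (Option (Fin n)) ℚ) ^ 2 -
        X none * ∏ i : Fin n, X (some i)} ∧
    Nonempty ((MvPolynomial (Option (Fin n)) ℚ ⧸
        Ideal.span {(X none : MvPolynomial (Option (Fin n)) ℚ) ^ 2 -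
          X none * ∏ i : Fin n, X (some i)}) ≃ₐ[ℚ] Psub n) := by
  exact ⟨range_Phi n, ker_Phi n,
    ⟨(Ideal.quotientEquivAlgOfEq ℚ (ker_Phi n).symm).trans
      ((Ideal.quotientKerEquivRange (Phi n)).trans
        (Subalgebra.equivOfEq _ _ (range_Phi n)))⟩⟩
end
end

section
/- Let A = ℚ[x, q]/(x² − x·q), the quotient of the polynomial ring in two variables x, q over ℚ. The assignments x ↦ x − q and q ↦ −q determine a well-defined ℚ-algebra automorphism σ of A with σ ∘ σ = id, and the fixed subalgebra A^σ = {a ∈ A : σ(a) = a} is exactly the ℚ-subalgebra of A generated by the element y = 2x − q. Moreover this fixed subalgebra is isomorphic as a ℚ-algebra to a polynomial ring in one variable, via sending the variable to 2x − q. -/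
/-!
In `A` the element `y = 2x - q` satisfies `y² = q²`, and `x = (y + q)/2`, so `A` is spanned over
`ℚ[y]` by `1` and `q`. The involution `σ` fixes `y` and negates `q`; hence if `a = f(y) + q g(y)`
is fixed, then `2 q g(y) = 0` and `a = f(y)`, with no freeness of this decomposition required.
That `y` is transcendental over `ℚ` is seen from the homomorphism `A → ℚ[t]`, `x, q ↦ t`,
which sends `y` to `t`.
-/

open MvPolynomial

noncomputable section

/-- `A = ℚ[x, q]/(x² - x·q)`, where `x = X 0` and `q = X 1`. -/
def Aring : Type :=
  MvPolynomial (Fin 2) ℚ ⧸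
    Ideal.span {(X 0 : MvPolynomial (Fin 2) ℚ) ^ 2 - X 0 * X 1}

instance : CommRing Aring := Ideal.Quotient.commRing _
instance : Algebra ℚ Aring := Ideal.Quotient.algebra ℚ

/-- The quotient map `ℚ[x, q] → A`. -/
def mkA : MvPolynomial (Fin 2) ℚ →ₐ[ℚ] Aring := Ideal.Quotient.mkₐ ℚ _

/-- The element `y = 2x - q` of `A`. -/
def yElt : Aring := mkA (2 * X 0 - X 1)

/-- The defining relation of `A`. -/
lemma mkA_rel : mkA (X 0) ^ 2 - mkA (X 0) * mkA (X 1) = 0 := by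
  rw [← map_pow, ← map_mul, ← map_sub]
  exact Ideal.Quotient.eq_zero_iff_mem.mpr (Ideal.subset_span rfl)

lemma mkA_surjective : Function.Surjective mkA := Ideal.Quotient.mk_surjective

/-- The universal property of `A`: a pair `(u, v)` with `u² = uv` in a `ℚ`-algebra determines a
homomorphism `x ↦ u`, `q ↦ v`. -/
def liftA {B : Type} [CommRing B] [Algebra ℚ B] (u v : B) (h : u ^ 2 - u * v = 0) :
    Aring →ₐ[ℚ] B :=
  Ideal.Quotient.liftₐ _ (aeval ![u, v]) (by
    intro a ha
    refine (Ideal.span_le (I := RingHom.ker (aeval ![u, v] : _ →ₐ[ℚ] B))).mpr ?_ ha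
    rintro _ rfl
    simpa [RingHom.mem_ker] using h)

lemma liftA_mkA {B : Type} [CommRing B] [Algebra ℚ B] (u v : B) (h : u ^ 2 - u * v = 0)
    (p : MvPolynomial (Fin 2) ℚ) : liftA u v h (mkA p) = aeval ![u, v] p := rfl

lemma yElt_eq : yElt = 2 * mkA (X 0) - mkA (X 1) := by
  rw [yElt, map_sub, map_mul, map_ofNat]

lemma q_sq : mkA (X 1) ^ 2 = yElt ^ 2 := by
  rw [yElt_eq]
  linear_combination -4 * mkA_rel

/-- `A` is spanned by `1` and `q` as a module over `ℚ[y]`. -/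
lemma exists_decomp (a : Aring) : ∃ f g : Polynomial ℚ,
    a = Polynomial.aeval yElt f + mkA (X 1) * Polynomial.aeval yElt g := by
  obtain ⟨p, rfl⟩ := mkA_surjective a
  induction p using MvPolynomial.induction_on with
  | C c =>
    refine ⟨Polynomial.C c, 0, ?_⟩
    rw [← MvPolynomial.algebraMap_eq, AlgHom.commutes]
    simp
  | add p r hp hr =>
    obtain ⟨f, g, h⟩ := hp
    obtain ⟨f', g', h'⟩ := hr
    refine ⟨f + f', g + g', ?_⟩
    rw [map_add, h, h', map_add, map_add]
    ring
  | mul_X p i hp =>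
    obtain ⟨f, g, h⟩ := hp
    fin_cases i
    · -- multiplication by `x = (y + q)/2`, reduced with `q² = y²`
      refine ⟨Polynomial.C (1 / 2) * (Polynomial.X * f + Polynomial.X ^ 2 * g),
        Polynomial.C (1 / 2) * (f + Polynomial.X * g), ?_⟩
      have half : algebraMap ℚ Aring (1 / 2) * 2 = 1 := by
        rw [← map_ofNat (algebraMap ℚ Aring) 2, ← map_mul]
        norm_num
      have hx : mkA (X 0) = algebraMap ℚ Aring (1 / 2) * (yElt + mkA (X 1)) := by
        rw [yElt_eq]
        linear_combination -mkA (X 0) * half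
      simp only [map_mul, map_add, map_pow, Polynomial.aeval_X, Polynomial.aeval_C, h,
        Fin.zero_eta]
      rw [hx]
      linear_combination algebraMap ℚ Aring (1 / 2) * Polynomial.aeval yElt g * q_sq
    · refine ⟨Polynomial.X ^ 2 * g, f, ?_⟩
      simp only [map_mul, map_pow, Polynomial.aeval_X, h, Fin.mk_one]
      linear_combination Polynomial.aeval yElt g * q_sq

/-- The endomorphism `x ↦ x - q`, `q ↦ -q` of `A`. -/
def sigmaHom : Aring →ₐ[ℚ] Aring :=
  liftA (mkA (X 0) - mkA (X 1)) (-mkA (X 1)) (by linear_combination mkA_rel)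

lemma sigmaHom_x : sigmaHom (mkA (X 0)) = mkA (X 0) - mkA (X 1) := by
  simp [sigmaHom, liftA_mkA]

lemma sigmaHom_q : sigmaHom (mkA (X 1)) = -mkA (X 1) := by
  simp [sigmaHom, liftA_mkA]

lemma sigmaHom_y : sigmaHom yElt = yElt := by
  rw [yElt_eq, map_sub, map_mul, sigmaHom_x, sigmaHom_q, map_ofNat]
  ring

lemma sigmaHom_aeval_y (f : Polynomial ℚ) :
    sigmaHom (Polynomial.aeval yElt f) = Polynomial.aeval yElt f := by
  rw [← Polynomial.aeval_algHom_apply, sigmaHom_y]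

lemma sigmaHom_comp : sigmaHom.comp sigmaHom = AlgHom.id ℚ Aring := by
  ext a
  obtain ⟨f, g, rfl⟩ := exists_decomp a
  simp [sigmaHom_aeval_y, sigmaHom_q]

lemma aeval_y_injective :
    Function.Injective (Polynomial.aeval yElt : Polynomial ℚ →ₐ[ℚ] Aring) := by
  -- the retraction `x, q ↦ t`
  refine Function.LeftInverse.injective
    (g := liftA (Polynomial.X : Polynomial ℚ) Polynomial.X (by ring)) fun f => ?_
  have hy : liftA (Polynomial.X : Polynomial ℚ) Polynomial.X (by ring) yElt = Polynomial.X := by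
    rw [yElt, liftA_mkA]
    simp only [map_sub, map_mul, map_ofNat, aeval_X, Matrix.cons_val_zero, Matrix.cons_val_one]
    ring
  rw [← Polynomial.aeval_algHom_apply, hy, Polynomial.aeval_X_left_apply]

/-- **The Weyl group action on `H^*_{S¹}(Conf₂(ℝ³)) = ℚ[x,q]/(x² - xq)` and its
fixed subalgebra.**  The assignments `x ↦ x - q`, `q ↦ -q` define an involutive
`ℚ`-algebra automorphism `σ` of `A`, whose fixed subalgebra is exactly the
subalgebra generated by `y = 2x - q`; moreover that subalgebra is isomorphic to a
polynomial ring in one variable via the variable `↦ 2x - q`. -/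
theorem stmt_8 :
    ∃ σ : Aring ≃ₐ[ℚ] Aring,
      σ (mkA (X 0)) = mkA (X 0 - X 1) ∧
      σ (mkA (X 1)) = -mkA (X 1) ∧
      σ.trans σ = AlgEquiv.refl ∧
      (∀ a : Aring, σ a = a ↔ a ∈ Algebra.adjoin ℚ ({yElt} : Set Aring)) ∧
      Function.Injective ⇑(Polynomial.aeval yElt : Polynomial ℚ →ₐ[ℚ] Aring) ∧
      (Polynomial.aeval yElt : Polynomial ℚ →ₐ[ℚ] Aring).range =
        Algebra.adjoin ℚ ({yElt} : Set Aring) := by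
  have hrange := (Algebra.adjoin_singleton_eq_range_aeval ℚ yElt).symm
  refine ⟨AlgEquiv.ofAlgHom sigmaHom sigmaHom sigmaHom_comp sigmaHom_comp, ?_, sigmaHom_q, ?_,
    fun a => ?_, aeval_y_injective, hrange⟩
  · rw [map_sub]
    exact sigmaHom_x
  · ext a
    exact DFunLike.congr_fun sigmaHom_comp a
  · change sigmaHom a = a ↔ _
    rw [← hrange]
    constructor
    · intro ha
      obtain ⟨f, g, rfl⟩ := exists_decomp a
      rw [map_add, map_mul, sigmaHom_aeval_y, sigmaHom_aeval_y, sigmaHom_q] at ha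
      have h2 : (2 : ℚ) • (mkA (X 1) * Polynomial.aeval yElt g) = 0 := by
        rw [two_smul]
        linear_combination -ha
      rw [(smul_eq_zero_iff_right two_ne_zero).mp h2, add_zero]
      exact ⟨f, rfl⟩
    · rintro ⟨f, rfl⟩
      exact sigmaHom_aeval_y f
end
end
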